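/- Let h : [0,∞) → ℝ be infinitely differentiable with h(0) = 0, h'(0) = 1, and the Schoenberg sign pattern h^{(2r−1)} ≥ 0, h^{(2r)} ≤ 0 on [0,∞) for all r ≥ 1, with h not identically zero. Let x_1,...,x_n be distinct real numbers and f_1,...,f_n > 0 with Σ_i f_i = 1, and for δ > 0 define Γ_δ(a) = Σ_i f_i h((x_i − a)²/δ). Then there exists a finite δ₀ > 0 such that for every δ ≥ δ₀ the function Γ_δ has a unique global minimizer a_δ ∈ ℝ, and a_δ → x̄_f = Σ_i f_i x_i as δ → ∞. -/

import Mathlib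

open Finset Set Filter Topology

/-!
Near `0` the radial profile `r ↦ h (r²)` has second derivative close to `2 h'(0) > 0`. Rescaling by
`√δ` makes `r ↦ h (r² / δ)` strictly convex on any prescribed ball once `δ` is large, and, `h` being
monotone, so is the transformed inertia on any prescribed bounded convex set.

Projecting a point onto the convex hull of the data brings it closer to every data point, hence does
not increase the inertia: a minimizer over the compact hull is global, and strict convexity around
the hull makes it unique.

For points `a` in the hull, `δ (Γ_δ(a) - h(0)) = h'(0) ∑ i, f i ‖x i - a‖² + o(1)` uniformly. By
Huygens' parallel axis identity the right-hand sum exceeds its value at the weighted mean by exactly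
`‖a - x̄_f‖²`, so the minimizers converge to `x̄_f`.
-/

open Metric Asymptotics

lemma monotoneOn_of_derivWithin_nonneg {h : ℝ → ℝ} {s : Set ℝ} (hs : Convex ℝ s)
    (hh : DifferentiableOn ℝ h s) (hnonneg : ∀ u ∈ interior s, 0 ≤ derivWithin h s u) :
    MonotoneOn h s := by
  refine monotoneOn_of_deriv_nonneg hs hh.continuousOn (hh.mono interior_subset) fun u hu => ?_
  rw [← derivWithin_of_mem_nhds (mem_interior_iff_mem_nhds.1 hu)]
  exact hnonneg u hu

lemma strictMonoOn_of_strictConvexOn_of_monotoneOn {g : ℝ → ℝ} {s : Set ℝ}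
    (hconv : StrictConvexOn ℝ s g) (hmono : MonotoneOn g s) : StrictMonoOn g s := by
  intro a ha b hb hab
  refine (hmono ha hb hab.le).lt_of_ne fun hgab => ?_
  obtain ⟨c, hac, hcb⟩ := exists_between hab
  have hc : c ∈ openSegment ℝ a b := by
    rw [openSegment_eq_Ioo hab]
    exact ⟨hac, hcb⟩
  have hlt := hconv.lt_on_openSegment ha hb hab.ne hc
  rw [← hgab, max_self] at hlt
  exact hlt.not_ge (hmono ha (hconv.1.ordConnected.out ha hb ⟨hac.le, hcb.le⟩) hac.le)

lemma exists_strictConvexOn_ball_of_deriv2_pos {g : ℝ → ℝ} {x : ℝ} (hg : ContDiffAt ℝ 2 g x)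
    (hpos : 0 < deriv^[2] g x) : ∃ ρ > 0, StrictConvexOn ℝ (ball x ρ) g := by
  have hg'' : ContDiffAt ℝ 0 (deriv^[2] g) x :=
    (hg.derivWithin (m := 1) (by norm_num)).derivWithin (by norm_num)
  have hev : ∀ᶠ y in 𝓝 x, ContDiffAt ℝ 2 g y ∧ 0 < deriv^[2] g y :=
    (hg.eventually (by simp)).and (hg''.continuousAt.eventually_const_lt hpos)
  obtain ⟨ρ, hρ, hball⟩ := eventually_nhds_iff_ball.1 hev
  exact ⟨ρ, hρ, strictConvexOn_of_deriv2_pos' (convex_ball x ρ)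
    (fun y hy => (hball y hy).1.continuousAt.continuousWithinAt) fun y hy => (hball y hy).2⟩

lemma strictConvexOn_comp_div_const {g : ℝ → ℝ} {ρ c : ℝ} (hc : 0 < c)
    (hg : StrictConvexOn ℝ (ball 0 ρ) g) :
    StrictConvexOn ℝ (ball 0 (ρ * c)) fun r => g (r / c) := by
  have hmem : ∀ r ∈ ball (0 : ℝ) (ρ * c), r / c ∈ ball (0 : ℝ) ρ := fun r hr => by
    rw [mem_ball_zero_iff, Real.norm_eq_abs] at hr ⊢
    rwa [abs_div, abs_of_pos hc, div_lt_iff₀ hc]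
  refine ⟨convex_ball _ _, fun a ha b hb hab s t hs ht hst => ?_⟩
  simpa only [smul_eq_mul, mul_div_assoc, add_div] using
    hg.2 (hmem a ha) (hmem b hb) ((div_left_inj' hc.ne').not.2 hab) hs ht hst

lemma strictConvexOn_sum_mul {ι E : Type*} [Fintype ι] [AddCommMonoid E] [SMul ℝ E] {s : Set E}
    {φ : ι → E → ℝ} {f : ι → ℝ} (hf : ∀ i, 0 ≤ f i) (hsum : 0 < ∑ i, f i)
    (hφ : ∀ i, StrictConvexOn ℝ s (φ i)) : StrictConvexOn ℝ s fun a => ∑ i, f i * φ i a := by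
  obtain ⟨i₀, hi₀, hne⟩ := Finset.exists_ne_zero_of_sum_ne_zero hsum.ne'
  have hpos : 0 < f i₀ := (hf i₀).lt_of_ne' hne
  refine ⟨(hφ i₀).1, fun a ha b hb hab u v hu hv huv => ?_⟩
  have hlt : ∀ i, φ i (u • a + v • b) < u • φ i a + v • φ i b := fun i =>
    (hφ i).2 ha hb hab hu hv huv
  calc ∑ i, f i * φ i (u • a + v • b)
      < ∑ i, f i * (u • φ i a + v • φ i b) :=
        Finset.sum_lt_sum (fun i _ => mul_le_mul_of_nonneg_left (hlt i).le (hf i))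
          ⟨i₀, hi₀, mul_lt_mul_of_pos_left (hlt i₀) hpos⟩
    _ = u • ∑ i, f i * φ i a + v • ∑ i, f i * φ i b := by
        simp only [smul_eq_mul, Finset.mul_sum, ← Finset.sum_add_distrib]
        exact Finset.sum_congr rfl fun i _ => by ring

lemma strictConvexOn_comp_norm_sub {E : Type*} [NormedAddCommGroup E] [NormedSpace ℝ E]
    [StrictConvexSpace ℝ E] {g : ℝ → ℝ} {R : ℝ} (hconv : StrictConvexOn ℝ (Ico 0 R) g)
    (hmono : MonotoneOn g (Ico 0 R)) (y : E) :
    StrictConvexOn ℝ (ball y R) fun a => g ‖y - a‖ := by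
  have hmem : ∀ a ∈ ball y R, ‖y - a‖ ∈ Ico 0 R := fun a ha =>
    ⟨norm_nonneg _, mem_ball_iff_norm'.1 ha⟩
  refine ⟨convex_ball y R, fun a ha b hb hab s t hs ht hst => ?_⟩
  have hcombo : y - (s • a + t • b) = s • (y - a) + t • (y - b) := by
    rw [smul_sub, smul_sub, sub_add_sub_comm, Convex.combo_self hst]
  have hmem_combo : ‖s • (y - a) + t • (y - b)‖ ∈ Ico 0 R :=
    hcombo ▸ hmem _ (convex_ball y R ha hb hs.le ht.le hst)
  beta_reduce
  rw [hcombo]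
  rcases eq_or_ne ‖y - a‖ ‖y - b‖ with heq | hne
  · have hlt : ‖s • (y - a) + t • (y - b)‖ < ‖y - a‖ :=
      norm_combo_lt_of_ne le_rfl heq.ge (sub_right_injective.ne hab) hs ht hst
    calc g ‖s • (y - a) + t • (y - b)‖
        < g ‖y - a‖ := strictMonoOn_of_strictConvexOn_of_monotoneOn hconv hmono hmem_combo
          (hmem a ha) hlt
      _ = s • g ‖y - a‖ + t • g ‖y - b‖ := by rw [← heq, Convex.combo_self hst]
  · have hle : ‖s • (y - a) + t • (y - b)‖ ≤ s • ‖y - a‖ + t • ‖y - b‖ := by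
      simpa only [norm_smul, Real.norm_of_nonneg hs.le, Real.norm_of_nonneg ht.le, smul_eq_mul]
        using norm_add_le (s • (y - a)) (t • (y - b))
    calc g ‖s • (y - a) + t • (y - b)‖
        ≤ g (s • ‖y - a‖ + t • ‖y - b‖) :=
          hmono hmem_combo (hconv.1 (hmem a ha) (hmem b hb) hs.le ht.le hst) hle
      _ < s • g ‖y - a‖ + t • g ‖y - b‖ := hconv.2 (hmem a ha) (hmem b hb) hne hs ht hst

lemma exists_mem_forall_norm_sub_le {E : Type*} [NormedAddCommGroup E] [InnerProductSpace ℝ E]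
    {K : Set E} (hne : K.Nonempty) (hcomplete : IsComplete K) (hconv : Convex ℝ K) (a : E) :
    ∃ p ∈ K, ∀ y ∈ K, ‖y - p‖ ≤ ‖y - a‖ := by
  obtain ⟨p, hpK, hp⟩ := exists_norm_eq_iInf_of_complete_convex hne hcomplete hconv a
  refine ⟨p, hpK, fun y hy => ?_⟩
  have hobtuse : inner ℝ (a - p) (y - p) ≤ 0 :=
    (norm_eq_iInf_iff_real_inner_le_zero hconv hpK).1 hp y hy
  rw [real_inner_comm] at hobtuse
  have hexpand := norm_sub_sq_real (y - p) (a - p)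
  rw [sub_sub_sub_cancel_right] at hexpand
  refine le_of_sq_le_sq ?_ (norm_nonneg _)
  nlinarith [sq_nonneg ‖a - p‖]

lemma exists_isMinOn_univ_unique {E : Type*} [AddCommGroup E] [Module ℝ E] [TopologicalSpace E]
    [IsTopologicalAddGroup E] [ContinuousSMul ℝ E] {Φ : E → ℝ} {K U : Set E} (hne : K.Nonempty)
    (hK : IsCompact K) (hU : IsOpen U) (hKU : K ⊆ U) (hcont : ContinuousOn Φ K)
    (hconv : StrictConvexOn ℝ U Φ)
    (hretract : ∀ a, ∃ p ∈ K, ∀ y ∈ segment ℝ p a, Φ y ≤ Φ a) :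
    ∃ a ∈ K, IsMinOn Φ univ a ∧ ∀ b, IsMinOn Φ univ b → b = a := by
  obtain ⟨a, haK, hamin⟩ := hK.exists_isMinOn hne hcont
  have ha : IsMinOn Φ univ a := fun b _ => by
    obtain ⟨p, hpK, hp⟩ := hretract b
    exact (hamin hpK).trans (hp p (left_mem_segment ℝ p b))
  refine ⟨a, haK, ha, fun b hb => ?_⟩
  have heq_of_mem : ∀ p ∈ U, IsMinOn Φ univ p → ∀ q ∈ U, IsMinOn Φ univ q → p = q :=
    fun p hpU hp q hqU hq =>
      hconv.eq_of_isMinOn (hp.on_subset (subset_univ U)) (hq.on_subset (subset_univ U)) hpU hqU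
  obtain ⟨p, hpK, hp⟩ := hretract b
  have hmin : ∀ y ∈ segment ℝ p b, IsMinOn Φ univ y := fun y hy c hc => (hp y hy).trans (hb hc)
  -- Every point of the segment is a minimizer; those close to `p` lie in `U`, so they equal `p`.
  have hlim : Tendsto (AffineMap.lineMap p b : ℝ → E) (𝓝[>] 0) (𝓝 p) := by
    have hcont₀ := (AffineMap.lineMap_continuous (p := p) (q := b) (R := ℝ)).tendsto 0
    rw [AffineMap.lineMap_apply_zero] at hcont₀
    exact hcont₀.mono_left nhdsWithin_le_nhds
  obtain ⟨t, htU, ht0, ht1⟩ :=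
    ((hlim.eventually (hU.mem_nhds (hKU hpK))).and (Ioo_mem_nhdsGT one_pos)).exists
  have htp : AffineMap.lineMap p b t = p :=
    heq_of_mem _ htU (hmin _ (lineMap_mem_segment ℝ p b ⟨ht0.le, ht1.le⟩)) p (hKU hpK)
      (hmin p (left_mem_segment ℝ p b))
  have hpb : p = b := (AffineMap.lineMap_eq_left_iff.1 htp).resolve_right ht0.ne'
  exact heq_of_mem b (hpb ▸ hKU hpK) hb a (hKU haK) ha

/-- The transformed inertia `Γ_δ(a)` of the points `x i`, weighted by `f i`, about the location `a`,
for the transformation `h` with squared characteristic length `δ`. The transformation acts on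
squared distances, and the normalizing factor `η(δ)` of the Schoenberg transformation, which does
not affect the minimizers, is left out. -/
noncomputable def transformedInertia {ι E : Type*} [Fintype ι] [NormedAddCommGroup E] (h : ℝ → ℝ)
    (f : ι → ℝ) (x : ι → E) (δ : ℝ) (a : E) : ℝ :=
  ∑ i, f i * h (‖x i - a‖ ^ 2 / δ)

section Profile

variable {h : ℝ → ℝ}

lemma contDiffAt_comp_sq_zero {n : WithTop ℕ∞} (hh : ContDiffWithinAt ℝ n h (Ici 0) 0) :
    ContDiffAt ℝ n (fun r => h (r ^ 2)) 0 := by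
  have hh' : ContDiffWithinAt ℝ n h (Ici 0) ((0 : ℝ) ^ 2) := by rwa [zero_pow two_ne_zero]
  exact (hh'.comp (f := fun r : ℝ => r ^ 2) (s := univ) 0 (by fun_prop)
    fun r _ => sq_nonneg r).contDiffAt univ_mem

lemma deriv2_comp_sq_zero (hh : ContDiffWithinAt ℝ 2 h (Ici 0) 0) :
    deriv^[2] (fun r => h (r ^ 2)) 0 = 2 * derivWithin h (Ici 0) 0 := by
  have hsq : Tendsto (fun r : ℝ => r ^ 2) (𝓝 0) (𝓝[Ici 0] 0) :=
    tendsto_nhdsWithin_iff.2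
      ⟨by simpa using (continuous_pow 2).tendsto (0 : ℝ), .of_forall fun r => sq_nonneg r⟩
  have hev : ∀ᶠ u in 𝓝[Ici 0] 0, ContDiffWithinAt ℝ 2 h (Ici 0) u := by
    simpa using hh.eventually (by simp)
  have hderiv : deriv (fun r => h (r ^ 2)) =ᶠ[𝓝 0]
      fun r => derivWithin h (Ici 0) (r ^ 2) * (2 * r) := by
    filter_upwards [hsq.eventually hev] with r hr
    have hpow : HasDerivAt (fun r : ℝ => r ^ 2) (2 * r) r := by simpa using hasDerivAt_pow 2 r
    exact ((hr.differentiableWithinAt two_ne_zero).hasDerivWithinAt.comp_hasDerivAt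
      (h := fun r : ℝ => r ^ 2) r hpow (.of_forall fun r => sq_nonneg r)).deriv
  have hdiff : DifferentiableAt ℝ (fun r : ℝ => derivWithin h (Ici 0) (r ^ 2)) 0 :=
    (contDiffAt_comp_sq_zero (hh.derivWithin (m := 1) (uniqueDiffOn_Ici 0) (by norm_num)
      self_mem_Ici)).differentiableAt one_ne_zero
  calc deriv^[2] (fun r => h (r ^ 2)) 0
      = deriv (fun r => derivWithin h (Ici 0) (r ^ 2) * (2 * r)) 0 := hderiv.deriv_eq
    _ = 2 * derivWithin h (Ici 0) 0 := by
        rw [deriv_fun_mul hdiff (by fun_prop)]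
        simp [mul_comm]

lemma eventually_strictConvexOn_comp_sq_div (hh : ContDiffWithinAt ℝ 2 h (Ici 0) 0)
    (hpos : 0 < derivWithin h (Ici 0) 0) (R : ℝ) :
    ∀ᶠ δ in atTop, StrictConvexOn ℝ (ball 0 R) fun r => h (r ^ 2 / δ) := by
  obtain ⟨ρ, hρ, hconv⟩ := exists_strictConvexOn_ball_of_deriv2_pos (contDiffAt_comp_sq_zero hh)
    (by rw [deriv2_comp_sq_zero hh]; positivity)
  filter_upwards [eventually_gt_atTop 0,
    (Real.tendsto_sqrt_atTop.const_mul_atTop hρ).eventually_ge_atTop R] with δ hδ hR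
  refine ((strictConvexOn_comp_div_const (Real.sqrt_pos.2 hδ) hconv).subset (ball_subset_ball hR)
    (convex_ball 0 R)).congr fun r _ => ?_
  simp only [div_pow, Real.sq_sqrt hδ.le]

lemma tendsto_mul_apply_div_sub_sub_mul {c : ℝ} (hh : HasDerivWithinAt h c (Ici 0) 0) {q : ℝ → ℝ}
    (hq : ∀ δ, 0 ≤ q δ) (hbdd : q =O[atTop] fun _ => (1 : ℝ)) :
    Tendsto (fun δ => δ * (h (q δ / δ) - h 0) - c * q δ) atTop (𝓝 0) := by
  have hqδ : Tendsto (fun δ => q δ / δ) atTop (𝓝[Ici 0] 0) := by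
    refine tendsto_nhdsWithin_iff.2 ⟨?_, ?_⟩
    · exact (hbdd.trans_isLittleO (isLittleO_const_id_atTop 1)).tendsto_div_nhds_zero
    · filter_upwards [eventually_ge_atTop 0] with δ hδ using div_nonneg (hq δ) hδ
  have hlittle : (fun δ => δ * (h (q δ / δ) - h 0 - (q δ / δ - 0) • c)) =o[atTop]
      fun δ => δ * (q δ / δ - 0) :=
    (isBigO_refl _ _).mul_isLittleO (hh.isLittleO.comp_tendsto hqδ)
  have hlittle_q : (fun δ => δ * (h (q δ / δ) - h 0) - c * q δ) =o[atTop] q := by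
    refine hlittle.congr' ?_ ?_ <;> filter_upwards [eventually_ne_atTop 0] with δ hδ
    · rw [smul_eq_mul]
      field_simp
      ring
    · field_simp
      ring
  exact (isLittleO_one_iff ℝ).1 (hlittle_q.trans_isBigO hbdd)

end Profile

section Inertia

variable {ι E : Type*} [Fintype ι] [NormedAddCommGroup E] {h : ℝ → ℝ} {f : ι → ℝ} {x : ι → E}
  {δ : ℝ}

lemma transformedInertia_le_of_norm_sub_le (hmono : MonotoneOn h (Ici 0)) (hf : ∀ i, 0 ≤ f i)
    (hδ : 0 ≤ δ) {a b : E} (hab : ∀ i, ‖x i - a‖ ≤ ‖x i - b‖) :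
    transformedInertia h f x δ a ≤ transformedInertia h f x δ b := by
  refine Finset.sum_le_sum fun i _ => mul_le_mul_of_nonneg_left ?_ (hf i)
  refine hmono (div_nonneg (sq_nonneg _) hδ) (div_nonneg (sq_nonneg _) hδ) ?_
  gcongr
  exact hab i

lemma continuousOn_transformedInertia {R : ℝ}
    (hcont : ContinuousOn (fun r => h (r ^ 2 / δ)) (ball 0 R)) {s : Set E}
    (hs : ∀ i, s ⊆ ball (x i) R) : ContinuousOn (transformedInertia h f x δ) s := by
  refine continuousOn_finsetSum _ fun i _ => continuousOn_const.mul ?_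
  refine hcont.comp (f := fun a => ‖x i - a‖) (by fun_prop) fun a ha => ?_
  rw [mem_ball_zero_iff, norm_norm]
  exact mem_ball_iff_norm'.1 (hs i ha)

lemma strictConvexOn_transformedInertia [NormedSpace ℝ E] [StrictConvexSpace ℝ E] {R : ℝ}
    (hconv : StrictConvexOn ℝ (Ico 0 R) fun r => h (r ^ 2 / δ)) (hmono : MonotoneOn h (Ici 0))
    (hf : ∀ i, 0 ≤ f i) (hsum : 0 < ∑ i, f i) (hδ : 0 ≤ δ) {s : Set E} (hs : Convex ℝ s)
    (hsR : ∀ i, s ⊆ ball (x i) R) : StrictConvexOn ℝ s (transformedInertia h f x δ) := by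
  have hmono' : MonotoneOn (fun r => h (r ^ 2 / δ)) (Ico 0 R) := fun a ha b _ hab =>
    hmono (div_nonneg (sq_nonneg _) hδ) (div_nonneg (sq_nonneg _) hδ)
      (div_le_div_of_nonneg_right (pow_le_pow_left₀ ha.1 hab 2) hδ)
  exact strictConvexOn_sum_mul hf hsum fun i =>
    (strictConvexOn_comp_norm_sub hconv hmono' (x i)).subset (hsR i) hs

lemma tendsto_mul_transformedInertia_sub_sub_mul {c : ℝ} (hh : HasDerivWithinAt h c (Ici 0) 0)
    (hsum : ∑ i, f i = 1) {a : ℝ → E} (ha : a =O[atTop] fun _ => (1 : ℝ)) :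
    Tendsto (fun δ => δ * (transformedInertia h f x δ (a δ) - h 0) -
      c * ∑ i, f i * ‖x i - a δ‖ ^ 2) atTop (𝓝 0) := by
  have hterm : ∀ i, Tendsto (fun δ => f i * (δ * (h (‖x i - a δ‖ ^ 2 / δ) - h 0) -
      c * ‖x i - a δ‖ ^ 2)) atTop (𝓝 0) := fun i => by
    have hbdd : (fun δ => ‖x i - a δ‖ ^ 2) =O[atTop] fun _ => (1 : ℝ) := by
      simpa using (((isBigO_const_const (x i) one_ne_zero atTop).sub ha).norm_left.pow 2)
    simpa using (tendsto_mul_apply_div_sub_sub_mul hh (fun _ => sq_nonneg _) hbdd).const_mul (f i)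
  have hlim := tendsto_finsetSum Finset.univ fun i _ => hterm i
  rw [Finset.sum_const_zero] at hlim
  refine hlim.congr fun δ => ?_
  have hh0 : h 0 = ∑ i, f i * h 0 := by rw [← Finset.sum_mul, hsum, one_mul]
  rw [transformedInertia, hh0, ← Finset.sum_sub_distrib, Finset.mul_sum, Finset.mul_sum,
    ← Finset.sum_sub_distrib, ← hh0]
  exact Finset.sum_congr rfl fun i _ => by ring

variable [InnerProductSpace ℝ E]

lemma sum_mul_norm_sub_sq_eq_add (hsum : ∑ i, f i = 1) (a : E) :
    ∑ i, f i * ‖x i - a‖ ^ 2 =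
      ∑ i, f i * ‖x i - ∑ j, f j • x j‖ ^ 2 + ‖a - ∑ j, f j • x j‖ ^ 2 := by
  set m := ∑ j, f j • x j with hm
  have hcross : ∑ i, f i * inner ℝ (x i - m) (a - m) = 0 := by
    have hzero : ∑ i, f i • (x i - m) = 0 := by
      simp only [smul_sub, Finset.sum_sub_distrib, ← Finset.sum_smul, hsum, one_smul, hm, sub_self]
    simp only [← real_inner_smul_left, ← sum_inner, hzero, inner_zero_left]
  calc ∑ i, f i * ‖x i - a‖ ^ 2
      = ∑ i, (f i * ‖x i - m‖ ^ 2 - 2 * (f i * inner ℝ (x i - m) (a - m)) +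
          f i * ‖a - m‖ ^ 2) := by
        refine Finset.sum_congr rfl fun i _ => ?_
        rw [← sub_sub_sub_cancel_right (x i) a m, norm_sub_sq_real]
        ring
    _ = ∑ i, f i * ‖x i - m‖ ^ 2 + ‖a - m‖ ^ 2 := by
        rw [Finset.sum_add_distrib, Finset.sum_sub_distrib, ← Finset.mul_sum, hcross,
          ← Finset.sum_mul, hsum]
        ring

lemma tendsto_mean_of_isMinOn_transformedInertia {c : ℝ} (hh : HasDerivWithinAt h c (Ici 0) 0)
    (hc : 0 < c) (hsum : ∑ i, f i = 1) {A : ℝ → E} (hA : A =O[atTop] fun _ => (1 : ℝ))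
    (hmin : ∀ᶠ δ in atTop, IsMinOn (transformedInertia h f x δ) univ (A δ)) :
    Tendsto A atTop (𝓝 (∑ i, f i • x i)) := by
  set m := ∑ i, f i • x i
  have hlim := ((tendsto_mul_transformedInertia_sub_sub_mul (x := x) hh hsum
    (isBigO_const_const m one_ne_zero atTop)).sub
    (tendsto_mul_transformedInertia_sub_sub_mul (x := x) hh hsum hA)).div_const c
  rw [sub_zero, zero_div] at hlim
  have hsq : Tendsto (fun δ => ‖A δ - m‖ ^ 2) atTop (𝓝 0) := by
    refine squeeze_zero' (.of_forall fun δ => sq_nonneg _) ?_ hlim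
    filter_upwards [hmin, eventually_ge_atTop 0] with δ hδmin hδ
    have hle := mul_le_mul_of_nonneg_left (hδmin (mem_univ m)) hδ
    rw [le_div_iff₀ hc, sum_mul_norm_sub_sq_eq_add hsum (A δ)]
    linarith
  rw [tendsto_iff_norm_sub_tendsto_zero]
  simpa using hsq.sqrt

lemma eventually_exists_isMinOn_transformedInertia_unique
    (hh : ContDiffWithinAt ℝ 2 h (Ici 0) 0) (hpos : 0 < derivWithin h (Ici 0) 0)
    (hmono : MonotoneOn h (Ici 0)) (hf : ∀ i, 0 ≤ f i) (hsum : 0 < ∑ i, f i) (x : ι → E) :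
    ∀ᶠ δ in atTop, ∃ a ∈ convexHull ℝ (range x), IsMinOn (transformedInertia h f x δ) univ a ∧
      ∀ b, IsMinOn (transformedInertia h f x δ) univ b → b = a := by
  set K := convexHull ℝ (range x)
  have hxK : ∀ i, x i ∈ K := fun i => subset_convexHull ℝ _ (mem_range_self i)
  have hK : IsCompact K := (finite_range x).isCompact_convexHull ℝ
  have hKconv : Convex ℝ K := convex_convexHull ℝ _
  have hKne : K.Nonempty := by
    obtain ⟨i, -⟩ := Finset.exists_ne_zero_of_sum_ne_zero hsum.ne'
    exact ⟨x i, hxK i⟩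
  have hKU : K ⊆ thickening 1 K := self_subset_thickening one_pos K
  obtain ⟨R, hR⟩ := isBounded_iff.1 (hK.isBounded.thickening (δ := 1))
  have hUball : ∀ i, thickening 1 K ⊆ ball (x i) (R + 1) := fun i a ha =>
    (hR ha (hKU (hxK i))).trans_lt (lt_add_one R)
  filter_upwards [eventually_strictConvexOn_comp_sq_div hh hpos (R + 1), eventually_ge_atTop 0]
    with δ hconv hδ
  refine exists_isMinOn_univ_unique hKne hK isOpen_thickening hKU ?_ ?_ fun a => ?_
  · exact continuousOn_transformedInertia (hconv.convexOn.continuousOn isOpen_ball)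
      fun i => hKU.trans (hUball i)
  · refine strictConvexOn_transformedInertia (hconv.subset (fun r hr => ?_) (convex_Ico 0 _)) hmono
      hf hsum hδ (hKconv.thickening 1) hUball
    rw [mem_ball_zero_iff, Real.norm_of_nonneg hr.1]
    exact hr.2
  · obtain ⟨p, hpK, hp⟩ := exists_mem_forall_norm_sub_le hKne hK.isComplete hKconv a
    refine ⟨p, hpK, fun y hy => transformedInertia_le_of_norm_sub_le hmono hf hδ fun i => ?_⟩
    have hseg : segment ℝ p a ⊆ closedBall (x i) ‖x i - a‖ :=
      (convex_closedBall _ _).segment_subset (mem_closedBall_iff_norm'.2 (hp _ (hxK i)))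
        (mem_closedBall_iff_norm'.2 le_rfl)
    exact mem_closedBall_iff_norm'.1 (hseg hy)

theorem rectifiable_unique_minimizer_tendsto_mean_general
    (hh : ContDiffWithinAt ℝ 2 h (Ici 0) 0) (hpos : 0 < derivWithin h (Ici 0) 0)
    (hmono : MonotoneOn h (Ici 0)) (hf : ∀ i, 0 ≤ f i) (hsum : ∑ i, f i = 1) (x : ι → E) :
    ∃ δ₀ : ℝ, 0 < δ₀ ∧ ∃ A : ℝ → E,
      (∀ δ : ℝ, δ₀ ≤ δ → IsMinOn (transformedInertia h f x δ) univ (A δ) ∧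
        ∀ b, IsMinOn (transformedInertia h f x δ) univ b → b = A δ) ∧
      Tendsto A atTop (𝓝 (∑ i, f i • x i)) := by
  obtain ⟨δ₀, hδ₀⟩ := eventually_atTop.1
    ((eventually_exists_isMinOn_transformedInertia_unique hh hpos hmono hf (hsum ▸ one_pos) x).and
      (eventually_gt_atTop 0))
  choose! A hAK hmin huniq using fun δ hδ => (hδ₀ δ hδ).1
  have hbdd : A =O[atTop] fun _ => (1 : ℝ) := by
    obtain ⟨C, hC⟩ := (finite_range x).isCompact_convexHull (𝕜 := ℝ) |>.isBounded.exists_norm_le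
    exact .of_bound C ((eventually_ge_atTop δ₀).mono fun δ hδ => by simpa using hC _ (hAK δ hδ))
  exact ⟨δ₀, (hδ₀ δ₀ le_rfl).2, A, fun δ hδ => ⟨hmin δ hδ, huniq δ hδ⟩,
    tendsto_mean_of_isMinOn_transformedInertia
      (hh.differentiableWithinAt two_ne_zero).hasDerivWithinAt hpos hsum hbdd
      ((eventually_ge_atTop δ₀).mono hmin)⟩

end Inertia

/-- **Theorem 3 (rectifiable transformations).** Let `h : [0,∞) → ℝ` be infinitely
differentiable with `h 0 = 0`, `h' 0 = 1`, the Schoenberg sign pattern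
(odd-order derivatives nonnegative, even-order derivatives nonpositive on `[0,∞)`),
and `h` not identically zero. For distinct reals `x 1, ..., x n` with positive weights
summing to `1` and `Γ_δ(a) = ∑ i, f i * h ((x i - a)²/δ)`, there is a finite `δ₀ > 0`
such that for every `δ ≥ δ₀` the function `Γ_δ` has a unique global minimizer `A δ`,
and `A δ → x̄_f = ∑ i, f i * x i` as `δ → ∞`. -/
theorem rectifiable_unique_minimizer_tendsto_mean {n : ℕ} (h : ℝ → ℝ)
    (hsmooth : ContDiffOn ℝ (⊤ : ℕ∞) h (Ici 0))
    (h0 : h 0 = 0)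
    (h1 : derivWithin h (Ici 0) 0 = 1)
    (hsign : ∀ r : ℕ, 1 ≤ r → ∀ D : ℝ, 0 ≤ D →
      0 ≤ iteratedDerivWithin (2 * r - 1) h (Ici 0) D ∧
        iteratedDerivWithin (2 * r) h (Ici 0) D ≤ 0)
    (hnz : ∃ D : ℝ, 0 ≤ D ∧ h D ≠ 0)
    (x : Fin n → ℝ) (hx : Function.Injective x)
    (f : Fin n → ℝ) (hf : ∀ i, 0 < f i) (hsum : ∑ i, f i = 1) :
    ∃ δ₀ : ℝ, 0 < δ₀ ∧ ∃ A : ℝ → ℝ,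
      (∀ δ : ℝ, δ₀ ≤ δ →
        (∀ b : ℝ, ∑ i, f i * h ((x i - A δ) ^ 2 / δ) ≤ ∑ i, f i * h ((x i - b) ^ 2 / δ)) ∧
        (∀ b : ℝ,
          (∀ c : ℝ, ∑ i, f i * h ((x i - b) ^ 2 / δ) ≤ ∑ i, f i * h ((x i - c) ^ 2 / δ)) →
          b = A δ)) ∧
      Tendsto A atTop (𝓝 (∑ i, f i * x i)) := by
  have hmono : MonotoneOn h (Ici 0) :=
    monotoneOn_of_derivWithin_nonneg (convex_Ici 0) (hsmooth.differentiableOn (by simp))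
      fun D hD => by simpa using (hsign 1 le_rfl D (interior_subset hD)).1
  simpa [transformedInertia, isMinOn_univ_iff] using
    rectifiable_unique_minimizer_tendsto_mean_general
      ((hsmooth 0 self_mem_Ici).of_le (by norm_cast)) (h1 ▸ one_pos) hmono
      (fun i => (hf i).le) hsum x
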